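/- arXiv:2305.05619 — 7 statements merged into one kernel-verified Lean document; each statement's English description precedes it below -/
import Mathlib

section
/- Let n ≥ 1 and let I be a nonempty subset of Fin (n+1). Then the subset {x ∈ S^n : for every i ∈ I and every index j, |x j| ≤ x i} of the unit sphere S^n is homeomorphic (with the subspace topology) to the cube [-1,1]^{n+1-|I|}, i.e. to the space of functions Fin (n+1-|I|) → Set.Icc (-1:ℝ) 1 with the product topology. -/
/-!
The points satisfying the coordinate inequalities form a cone. Rescaling along rays identifies its
intersection with the unit sphere with its slice `x i₀ = 1`, for any `i₀ ∈ I`. On that slice all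
coordinates in `I` equal `1` and the others range freely over `[-1, 1]`.
-/

open Set

section Radial

variable {E : Type*} [MulAction ℝ E] {C : Set E} {f g : E → ℝ}

lemma inv_smul_mem_level_inter (hC : ∀ t : ℝ, 0 < t → ∀ x ∈ C, t • x ∈ C)
    (g_smul : ∀ t : ℝ, 0 < t → ∀ x, g (t • x) = t * g x) {x : E} (hx : x ∈ C) (hgx : 0 < g x) :
    g ((g x)⁻¹ • x) = 1 ∧ (g x)⁻¹ • x ∈ C :=
  ⟨by rw [g_smul _ (inv_pos.2 hgx), inv_mul_cancel₀ hgx.ne'], hC _ (inv_pos.2 hgx) x hx⟩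

lemma inv_smul_inv_smul_of_eq_one (f_smul : ∀ t : ℝ, 0 < t → ∀ x, f (t • x) = t * f x) {x : E}
    (hfx : f x = 1) (hgx : 0 < g x) :
    (f ((g x)⁻¹ • x))⁻¹ • (g x)⁻¹ • x = x := by
  rw [f_smul _ (inv_pos.2 hgx), hfx, mul_one, inv_inv, smul_inv_smul₀ hgx.ne']

variable [TopologicalSpace E] [ContinuousSMul ℝ E]

/-- Rescaling along rays, as a homeomorphism between the level sets `f = 1` and `g = 1` inside a
cone `C`, for positively homogeneous functions `f` and `g`. A cone is here any set stable under
positive scalars; it need not be convex and may contain the origin. -/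
noncomputable def radialHomeomorph (hC : ∀ t : ℝ, 0 < t → ∀ x ∈ C, t • x ∈ C)
    (hf : Continuous f) (f_smul : ∀ t : ℝ, 0 < t → ∀ x, f (t • x) = t * f x)
    (hg : Continuous g) (g_smul : ∀ t : ℝ, 0 < t → ∀ x, g (t • x) = t * g x)
    (f_pos : ∀ x ∈ C, g x = 1 → 0 < f x) (g_pos : ∀ x ∈ C, f x = 1 → 0 < g x) :
    {x // f x = 1 ∧ x ∈ C} ≃ₜ {x // g x = 1 ∧ x ∈ C} where
  toFun x := ⟨(g x)⁻¹ • x.1, inv_smul_mem_level_inter hC g_smul x.2.2 (g_pos x x.2.2 x.2.1)⟩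
  invFun x := ⟨(f x)⁻¹ • x.1, inv_smul_mem_level_inter hC f_smul x.2.2 (f_pos x x.2.2 x.2.1)⟩
  left_inv x := Subtype.ext <|
    inv_smul_inv_smul_of_eq_one f_smul x.2.1 (g_pos x x.2.2 x.2.1)
  right_inv x := Subtype.ext <|
    inv_smul_inv_smul_of_eq_one g_smul x.2.1 (f_pos x x.2.2 x.2.1)
  continuous_toFun := Continuous.subtype_mk (((hg.comp' continuous_subtype_val).inv₀
    fun x => (g_pos x x.2.2 x.2.1).ne').smul continuous_subtype_val) _
  continuous_invFun := Continuous.subtype_mk (((hf.comp' continuous_subtype_val).inv₀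
    fun x => (f_pos x x.2.2 x.2.1).ne').smul continuous_subtype_val) _

end Radial

section DominantCone

variable {ι : Type*}

/-- The cone of vectors each of whose coordinates in `I` dominates the absolute values of all
coordinates. The sheet indexed by `I` is its intersection with the unit sphere. -/
def dominantCone (I : Set ι) : Set (ι → ℝ) :=
  {x | ∀ i ∈ I, ∀ j, |x j| ≤ x i}

variable {I : Set ι} {i₀ : ι} {x : ι → ℝ}

lemma smul_mem_dominantCone {t : ℝ} (ht : 0 < t) (hx : x ∈ dominantCone I) :
    t • x ∈ dominantCone I := by
  intro i hi j
  rw [Pi.smul_apply, Pi.smul_apply, smul_eq_mul, smul_eq_mul, abs_mul, abs_of_pos ht]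
  exact mul_le_mul_of_nonneg_left (hx i hi j) ht.le

lemma pos_of_mem_dominantCone (hx : x ∈ dominantCone I) (hx₀ : x ≠ 0) (hi₀ : i₀ ∈ I) :
    0 < x i₀ := by
  obtain ⟨j, hj⟩ := Function.ne_iff.1 hx₀
  exact (abs_pos.2 hj).trans_le (hx i₀ hi₀ j)

lemma eq_one_and_mem_dominantCone_iff (hi₀ : i₀ ∈ I) :
    x i₀ = 1 ∧ x ∈ dominantCone I ↔ (∀ i ∈ I, x i = 1) ∧ ∀ j, x j ∈ Icc (-1 : ℝ) 1 := by
  constructor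
  · rintro ⟨h₁, hx⟩
    have abs_le_one (j : ι) : |x j| ≤ 1 := h₁ ▸ hx i₀ hi₀ j
    refine ⟨fun i hi => le_antisymm (abs_le.1 (abs_le_one i)).2 ?_,
      fun j => abs_le.1 (abs_le_one j)⟩
    exact h₁ ▸ (le_abs_self _).trans (hx i hi i₀)
  · rintro ⟨h₁, hx⟩
    exact ⟨h₁ i₀ hi₀, fun i hi j => (h₁ i hi).symm ▸ abs_le.2 (hx j)⟩

open Classical in
/-- The slice `x i₀ = 1` of the dominant cone of `I`, where `i₀ ∈ I`, is a face of the cube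
`[-1, 1]^ι`; the coordinates outside `I` identify it with a cube. -/
noncomputable def dominantConeSliceHomeomorph (hi₀ : i₀ ∈ I) :
    {x : ι → ℝ // x i₀ = 1 ∧ x ∈ dominantCone I} ≃ₜ ({j // j ∉ I} → Icc (-1 : ℝ) 1) where
  toFun x j := ⟨x.1 j, ((eq_one_and_mem_dominantCone_iff hi₀).1 x.2).2 j⟩
  invFun c := ⟨fun j => if hj : j ∈ I then 1 else c ⟨j, hj⟩,
    (eq_one_and_mem_dominantCone_iff hi₀).2 ⟨fun i hi => dif_pos hi, fun j => by
      split_ifs with hj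
      · norm_num
      · exact (c ⟨j, hj⟩).2⟩⟩
  left_inv x := by
    ext j
    by_cases hj : j ∈ I
    · simp [hj, ((eq_one_and_mem_dominantCone_iff hi₀).1 x.2).1 j hj]
    · simp [hj]
  right_inv c := by
    ext j
    simp [j.2]
  continuous_toFun := continuous_pi fun j =>
    Continuous.subtype_mk ((continuous_apply j.1).comp continuous_subtype_val) _
  continuous_invFun := by
    refine Continuous.subtype_mk (continuous_pi fun j => ?_) _
    split_ifs <;> fun_prop

variable {E : Type*} [NormedAddCommGroup E] [NormedSpace ℝ E]

/-- Radial projection from the unit sphere to the slice `x i₀ = 1` inside the dominant cone of `I`,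
where `i₀ ∈ I`. The norm on `E` is arbitrary; coordinates on `E` are given by `e`. -/
noncomputable def dominantConeSphereHomeomorphSlice (e : E ≃L[ℝ] (ι → ℝ)) (hi₀ : i₀ ∈ I) :
    {x : E // ‖x‖ = 1 ∧ x ∈ e ⁻¹' dominantCone I} ≃ₜ
      {x : E // e x i₀ = 1 ∧ x ∈ e ⁻¹' dominantCone I} := by
  refine radialHomeomorph ?_ continuous_norm ?_ (by fun_prop) ?_ ?_ ?_
  · intro t ht x hx
    simpa only [mem_preimage, map_smul] using smul_mem_dominantCone ht hx
  · intro t ht x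
    rw [norm_smul, Real.norm_of_nonneg ht.le]
  · intro t _ x
    rw [map_smul, Pi.smul_apply, smul_eq_mul]
  · rintro x - hx
    exact norm_pos_iff.2 (by rintro rfl; simp at hx)
  · intro x hxC hx
    have x_ne_zero : x ≠ 0 := norm_ne_zero_iff.1 (by simp [hx])
    exact pos_of_mem_dominantCone hxC (by simpa using x_ne_zero) hi₀

end DominantCone

theorem sheet_homeo_cube_general {ι E : Type*} [NormedAddCommGroup E] [NormedSpace ℝ E]
    (e : E ≃L[ℝ] (ι → ℝ)) {I : Set ι} (hI : I.Nonempty) :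
    Nonempty ({x : E // x ∈ Metric.sphere (0 : E) 1 ∧ ∀ i ∈ I, ∀ j, |e x j| ≤ e x i} ≃ₜ
      ({j // j ∉ I} → Icc (-1 : ℝ) 1)) := by
  obtain ⟨i₀, hi₀⟩ := hI
  have sheet_iff (x : E) : (x ∈ Metric.sphere (0 : E) 1 ∧ ∀ i ∈ I, ∀ j, |e x j| ≤ e x i) ↔
      ‖x‖ = 1 ∧ x ∈ e ⁻¹' dominantCone I :=
    and_congr_left' mem_sphere_zero_iff_norm
  exact ⟨((Homeomorph.refl E).subtype sheet_iff).trans <|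
    (dominantConeSphereHomeomorphSlice e hi₀).trans <|
    (e.toHomeomorph.subtype fun _ => Iff.rfl).trans <| dominantConeSliceHomeomorph hi₀⟩

/-- One "sheet" of the intersection of the pieces of the good ball decomposition of
`ℝP^n` lifted to the sphere: the subset of the unit sphere `S^n ⊂ ℝ^{n+1}` consisting
of points `x` with `|x j| ≤ x i` for all `i ∈ I` and all `j` is homeomorphic to the
cube `[-1,1]^{n+1-|I|}`. -/
theorem sheet_homeo_cube (n : ℕ) (hn : 1 ≤ n) (I : Finset (Fin (n + 1))) (hI : I.Nonempty) :
    Nonempty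
      ({x : EuclideanSpace ℝ (Fin (n + 1)) //
          x ∈ Metric.sphere (0 : EuclideanSpace ℝ (Fin (n + 1))) 1 ∧
            ∀ i ∈ I, ∀ j, |x j| ≤ x i} ≃ₜ
        (Fin (n + 1 - I.card) → Set.Icc (-1 : ℝ) 1)) :=
  (sheet_homeo_cube_general (EuclideanSpace.equiv (Fin (n + 1)) ℝ) (I := I) hI).map fun h =>
    h.trans <| Homeomorph.piCongrLeft (Y := fun _ => Icc (-1 : ℝ) 1) <|
      Fintype.equivFinOfCardEq (by simp [Fintype.card_subtype_compl])
end

section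
/- Let n ≥ 1. For i ∈ Fin (n+1) let B_i = {x ∈ S^n : |x j| ≤ |x i| for all j}. Then: (1) each B_i is closed and the B_i cover S^n; (2) for every nonempty subset I ⊆ Fin (n+1) with |I| = k, the intersection ⋂_{i∈I} B_i = {x ∈ S^n : for all i ∈ I and all j, |x j| ≤ |x i|} is homeomorphic to Fin (2^k) × [-1,1]^{n+1-k}, i.e. to a disjoint union of 2^k cubes of dimension n+1−k. In particular, for |I| = n+1 the intersection of all the B_i consists of exactly 2^{n+1} points. -/
/-!
Radial projection identifies the unit sphere of an arbitrary norm on `ℝ^ι` with that of the sup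
norm, i.e. with the boundary of the cube `[-1, 1]^ι`, and it preserves every cone. On the boundary
of the cube, `|y i|` is maximal among the coordinates exactly when `y i = ±1`. So the intersection
of the pieces indexed by `I ≠ ∅` becomes the set of points of the cube whose `I`-coordinates are
signs: a product of `{-1, 1}^I` with the cube in the remaining coordinates.
-/

open Metric NormedSpace Set

section RadialProjection

variable {E F : Type*} [NormedAddCommGroup E] [NormedSpace ℝ E]
  [NormedAddCommGroup F] [NormedSpace ℝ F]

theorem continuousOn_normalize : ContinuousOn (normalize : E → E) {0}ᶜ :=
  (continuousOn_id.norm.inv₀ fun _ hx => norm_ne_zero_iff.2 hx).smul continuousOn_id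

theorem map_normalize {V L : Type*} [AddCommGroup V] [Module ℝ V] [FunLike L E V]
    [LinearMapClass L ℝ E V] (f : L) (x : E) : f (normalize x) = ‖x‖⁻¹ • f x :=
  map_smul f _ _

theorem map_ne_zero_of_mem_sphere (φ : E ≃L[ℝ] F) {x : E} (hx : x ∈ sphere (0 : E) 1) :
    φ x ≠ 0 :=
  φ.map_eq_zero_iff.not.2 (ne_of_mem_sphere hx one_ne_zero)

theorem normalize_map_mem_sphere (φ : E ≃L[ℝ] F) {x : E} (hx : x ∈ sphere (0 : E) 1) :
    normalize (φ x) ∈ sphere (0 : F) 1 :=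
  mem_sphere_zero_iff_norm.2 (norm_normalize (map_ne_zero_of_mem_sphere φ hx))

theorem inv_norm_map_pos_of_mem_sphere (φ : E ≃L[ℝ] F) {x : E} (hx : x ∈ sphere (0 : E) 1) :
    0 < ‖φ x‖⁻¹ :=
  inv_pos.2 (norm_pos_iff.2 (map_ne_zero_of_mem_sphere φ hx))

theorem normalize_symm_normalize_map (φ : E ≃L[ℝ] F) {x : E} (hx : x ∈ sphere (0 : E) 1) :
    normalize (φ.symm (normalize (φ x))) = x :=
  calc normalize (φ.symm (normalize (φ x)))
      = normalize (‖φ x‖⁻¹ • x) := by rw [map_normalize, φ.symm_apply_apply]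
    _ = normalize x := normalize_smul_of_pos (inv_norm_map_pos_of_mem_sphere φ hx) x
    _ = x := normalize_eq_self_of_norm_eq_one (mem_sphere_zero_iff_norm.1 hx)

/-- Radial projection `x ↦ φ x / ‖φ x‖` between the unit spheres of two isomorphic normed spaces,
restricted to the part over a cone `C`: a set closed under multiplication by positive scalars. -/
noncomputable def sphereInterConeHomeomorph (φ : E ≃L[ℝ] F) {C : Set F}
    (hC : ∀ c : ℝ, 0 < c → ∀ y ∈ C, c • y ∈ C) :
    ↥(sphere (0 : E) 1 ∩ φ ⁻¹' C) ≃ₜ ↥(sphere (0 : F) 1 ∩ C) where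
  toFun x := ⟨normalize (φ x), normalize_map_mem_sphere φ x.2.1,
    hC _ (inv_norm_map_pos_of_mem_sphere φ x.2.1) _ x.2.2⟩
  invFun y := ⟨normalize (φ.symm y), normalize_map_mem_sphere φ.symm y.2.1, by
    rw [mem_preimage, map_normalize, φ.apply_symm_apply]
    exact hC _ (inv_norm_map_pos_of_mem_sphere φ.symm y.2.1) _ y.2.2⟩
  left_inv x := Subtype.ext (normalize_symm_normalize_map φ x.2.1)
  right_inv y := Subtype.ext (normalize_symm_normalize_map φ.symm y.2.1)
  continuous_toFun := (continuousOn_normalize.comp_continuous (by fun_prop)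
    fun x => map_ne_zero_of_mem_sphere φ x.2.1).subtype_mk _
  continuous_invFun := (continuousOn_normalize.comp_continuous (by fun_prop)
    fun y => map_ne_zero_of_mem_sphere φ.symm y.2.1).subtype_mk _

end RadialProjection

section MaxCoordCone

variable {ι : Type*}

/-- The cone of vectors whose `i`-th coordinate is maximal in absolute value. -/
def maxCoordCone (i : ι) : Set (ι → ℝ) := {y | ∀ j, |y j| ≤ |y i|}

theorem smul_mem_maxCoordCone {i : ι} {y : ι → ℝ} (c : ℝ) (hy : y ∈ maxCoordCone i) :
    c • y ∈ maxCoordCone i := fun j => by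
  simpa only [Pi.smul_apply, smul_eq_mul, abs_mul] using
    mul_le_mul_of_nonneg_left (hy j) (abs_nonneg c)

theorem isClosed_maxCoordCone (i : ι) : IsClosed (maxCoordCone i) := by
  simp only [maxCoordCone, ofPred_forall]
  exact isClosed_iInter fun j => isClosed_le (by fun_prop) (by fun_prop)

theorem iUnion_maxCoordCone [Finite ι] [Nonempty ι] : ⋃ i : ι, maxCoordCone i = univ :=
  eq_univ_of_forall fun y => mem_iUnion.2 (Finite.exists_max fun j => |y j|)

theorem mem_maxCoordCone_iff_abs_eq_norm [Fintype ι] {i : ι} {y : ι → ℝ} :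
    y ∈ maxCoordCone i ↔ |y i| = ‖y‖ := by
  refine ⟨fun hy => (norm_le_pi_norm y i).antisymm ?_, fun hy j => hy ▸ norm_le_pi_norm y j⟩
  exact (pi_norm_le_iff_of_nonneg (abs_nonneg _)).2 hy

end MaxCoordCone

section CubeFaces

variable {ι : Type*}

/-- The union of the faces of the cube `[-1, 1]^ι` on which the coordinates in `I` are
constantly `1` or `-1`. -/
def cubeFaces (I : Set ι) : Set (ι → ℝ) :=
  {y | (∀ i ∈ I, y i ∈ ({-1, 1} : Set ℝ)) ∧ ∀ i ∉ I, y i ∈ Icc (-1 : ℝ) 1}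

theorem mem_cubeFaces_iff_abs {I : Set ι} {y : ι → ℝ} :
    y ∈ cubeFaces I ↔ (∀ i ∈ I, |y i| = 1) ∧ ∀ i, |y i| ≤ 1 := by
  have mem_signs_iff (t : ℝ) : t ∈ ({-1, 1} : Set ℝ) ↔ |t| = 1 := by
    rw [abs_eq zero_le_one, or_comm, mem_insert_iff, mem_singleton_iff]
  simp only [cubeFaces, mem_ofPred_eq, mem_signs_iff, mem_Icc, ← abs_le]
  refine and_congr_right fun hI => ⟨fun h i => ?_, fun h i _ => h i⟩
  exact (em (i ∈ I)).elim (fun hi => (hI i hi).le) (h i)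

theorem sphere_inter_biInter_maxCoordCone [Fintype ι] {I : Set ι} (hI : I.Nonempty) :
    sphere (0 : ι → ℝ) 1 ∩ ⋂ i ∈ I, maxCoordCone i = cubeFaces I := by
  ext y
  simp only [mem_inter_iff, mem_sphere_zero_iff_norm, mem_iInter₂,
    mem_maxCoordCone_iff_abs_eq_norm, mem_cubeFaces_iff_abs]
  constructor
  · rintro ⟨norm_y, hy⟩
    exact ⟨fun i hi => (hy i hi).trans norm_y, fun i => norm_y ▸ norm_le_pi_norm y i⟩
  · rintro ⟨abs_eq_one, abs_le_one⟩
    obtain ⟨i₀, hi₀⟩ := hI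
    have norm_y : ‖y‖ = 1 := ((pi_norm_le_iff_of_nonneg zero_le_one).2 abs_le_one).antisymm
      (abs_eq_one i₀ hi₀ ▸ norm_le_pi_norm y i₀)
    exact ⟨norm_y, fun i hi => (abs_eq_one i hi).trans norm_y.symm⟩

/-- A point of `cubeFaces I` is a choice of signs on `I` and of a point of the cube off `I`. -/
def cubeFacesHomeomorphProd (I : Set ι) [DecidablePred (· ∈ I)] :
    cubeFaces I ≃ₜ ({i // i ∈ I} → ({-1, 1} : Set ℝ)) × ({i // i ∉ I} → Icc (-1 : ℝ) 1) where
  toFun y := (fun i => ⟨y.1 i, y.2.1 i i.2⟩, fun i => ⟨y.1 i, y.2.2 i i.2⟩)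
  invFun p := ⟨(Homeomorph.piEquivPiSubtypeProd (· ∈ I) fun _ => ℝ).symm
      (fun i => p.1 i, fun i => p.2 i),
    fun i hi => by simp [Homeomorph.piEquivPiSubtypeProd, hi],
    fun i hi => by simp [Homeomorph.piEquivPiSubtypeProd, hi]⟩
  left_inv y := Subtype.ext <|
    (Homeomorph.piEquivPiSubtypeProd (· ∈ I) fun _ => ℝ).symm_apply_apply y
  right_inv p := by
    ext i <;> simp [Homeomorph.piEquivPiSubtypeProd, i.2]
  continuous_toFun := .prodMk
    (continuous_pi fun i => ((continuous_apply i.1).comp continuous_subtype_val).subtype_mk _)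
    (continuous_pi fun i => ((continuous_apply i.1).comp continuous_subtype_val).subtype_mk _)
  continuous_invFun := by fun_prop

theorem nonempty_signs_homeomorph_fin (κ : Type*) [Finite κ] :
    Nonempty ((κ → ({-1, 1} : Set ℝ)) ≃ₜ Fin (2 ^ Nat.card κ)) := by
  have card_signs : Nat.card (κ → ({-1, 1} : Set ℝ)) = 2 ^ Nat.card κ := by
    rw [Nat.card_fun, Nat.card_coe_set_eq, ncard_pair (by norm_num)]
  exact ⟨(Finite.equivFinOfCardEq card_signs).toHomeomorphOfDiscrete⟩

theorem nonempty_cubeFaces_homeomorph [Fintype ι] (I : Finset ι) :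
    Nonempty (cubeFaces (I : Set ι) ≃ₜ
      Fin (2 ^ I.card) × (Fin (Fintype.card ι - I.card) → Icc (-1 : ℝ) 1)) := by
  classical
  obtain ⟨signs⟩ := nonempty_signs_homeomorph_fin {i // i ∈ I}
  have card_off : Fintype.card {i // i ∉ I} = Fintype.card ι - I.card := by
    simp [Fintype.card_subtype_compl]
  rw [Nat.card_eq_fintype_card, Fintype.card_coe] at signs
  exact ⟨(cubeFacesHomeomorphProd (I : Set ι)).trans <| signs.prodCongr <|
    Homeomorph.piCongrLeft (Y := fun _ => Icc (-1 : ℝ) 1) (Fintype.equivFinOfCardEq card_off)⟩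

end CubeFaces

section GoodBallPiece

variable {ι E : Type*} [NormedAddCommGroup E] [NormedSpace ℝ E]

/-- The lift `B i` of the piece `M i` of the good ball decomposition of projective space to the
unit sphere of a normed space `E`, which is given coordinates by `φ`. -/
def goodBallPiece (φ : E ≃L[ℝ] (ι → ℝ)) (i : ι) : Set E :=
  sphere 0 1 ∩ φ ⁻¹' maxCoordCone i

variable (φ : E ≃L[ℝ] (ι → ℝ))

theorem isClosed_goodBallPiece (i : ι) : IsClosed (goodBallPiece φ i) :=
  isClosed_sphere.inter ((isClosed_maxCoordCone i).preimage φ.continuous)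

theorem iUnion_goodBallPiece [Finite ι] [Nonempty ι] : ⋃ i, goodBallPiece φ i = sphere 0 1 := by
  simp only [goodBallPiece, ← inter_iUnion, ← preimage_iUnion, iUnion_maxCoordCone,
    preimage_univ, inter_univ]

theorem biInter_goodBallPiece {I : Set ι} (hI : I.Nonempty) :
    ⋂ i ∈ I, goodBallPiece φ i = sphere 0 1 ∩ φ ⁻¹' ⋂ i ∈ I, maxCoordCone i := by
  simp only [goodBallPiece, preimage_iInter, inter_biInter hI]

theorem nonempty_biInter_goodBallPiece_homeomorph [Fintype ι] {I : Finset ι} (hI : I.Nonempty) :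
    Nonempty ((⋂ i ∈ I, goodBallPiece φ i) ≃ₜ
      Fin (2 ^ I.card) × (Fin (Fintype.card ι - I.card) → Icc (-1 : ℝ) 1)) := by
  have smul_mem (c : ℝ) (_ : 0 < c) (y : ι → ℝ) (hy : y ∈ ⋂ i ∈ I, maxCoordCone i) :
      c • y ∈ ⋂ i ∈ I, maxCoordCone i :=
    mem_iInter₂.2 fun i hi => smul_mem_maxCoordCone c (mem_iInter₂.1 hy i hi)
  obtain ⟨faces⟩ := nonempty_cubeFaces_homeomorph I
  exact ⟨(Homeomorph.setCongr (biInter_goodBallPiece φ hI)).trans <|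
    (sphereInterConeHomeomorph φ smul_mem).trans <|
    (Homeomorph.setCongr (sphere_inter_biInter_maxCoordCone hI)).trans faces⟩

theorem ncard_iInter_goodBallPiece [Fintype ι] [Nonempty ι] :
    (⋂ i, goodBallPiece φ i).ncard = 2 ^ Fintype.card ι := by
  obtain ⟨e⟩ := nonempty_biInter_goodBallPiece_homeomorph φ (Finset.univ_nonempty (α := ι))
  simpa [← Nat.card_coe_set_eq] using Nat.card_congr e.toEquiv

theorem goodBallPieces_sphere_general [Fintype ι] [Nonempty ι] :
    (∀ i, IsClosed (goodBallPiece φ i)) ∧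
    (⋃ i, goodBallPiece φ i) = sphere 0 1 ∧
    (∀ I : Finset ι, I.Nonempty →
      Nonempty ((⋂ i ∈ I, goodBallPiece φ i) ≃ₜ
        (Fin (2 ^ I.card) × (Fin (Fintype.card ι - I.card) → Icc (-1 : ℝ) 1)))) ∧
    (⋂ i, goodBallPiece φ i).ncard = 2 ^ Fintype.card ι :=
  ⟨isClosed_goodBallPiece φ, iUnion_goodBallPiece φ,
    fun _ => nonempty_biInter_goodBallPiece_homeomorph φ, ncard_iInter_goodBallPiece φ⟩

end GoodBallPiece

/-- The pieces `B i = {x ∈ S^n : ∀ j, |x j| ≤ |x i|}` of the lift to `S^n` of the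
good ball decomposition of `ℝP^n`: each is closed, they cover the sphere, every
intersection over a nonempty index set `I` of cardinality `k` is homeomorphic to a
disjoint union of `2^k` cubes of dimension `n+1-k`, and in particular the total
intersection consists of exactly `2^(n+1)` points. -/
theorem goodBallPieces_sphere (n : ℕ) (hn : 1 ≤ n)
    (B : Fin (n + 1) → Set (EuclideanSpace ℝ (Fin (n + 1))))
    (hB : ∀ i, B i = {x | x ∈ Metric.sphere (0 : EuclideanSpace ℝ (Fin (n + 1))) 1 ∧
        ∀ j, |x j| ≤ |x i|}) :
    (∀ i, IsClosed (B i)) ∧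
    (⋃ i, B i) = Metric.sphere (0 : EuclideanSpace ℝ (Fin (n + 1))) 1 ∧
    (∀ I : Finset (Fin (n + 1)), I.Nonempty →
      Nonempty ((⋂ i ∈ I, B i) ≃ₜ
        (Fin (2 ^ I.card) × (Fin (n + 1 - I.card) → Set.Icc (-1 : ℝ) 1)))) ∧
    Set.ncard (⋂ i, B i) = 2 ^ (n + 1) := by
  obtain rfl : B = goodBallPiece (PiLp.continuousLinearEquiv 2 ℝ fun _ => ℝ) := funext hB
  have pieces := goodBallPieces_sphere_general
    (PiLp.continuousLinearEquiv 2 ℝ fun _ : Fin (n + 1) => ℝ)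
  rwa [Fintype.card_fin] at pieces
end

section
/- For every n ≥ 0, the set of one-dimensional ℝ-linear subspaces L of (Fin (n+1) → ℝ) such that L is spanned by some nonzero vector v with |v i| = |v j| for all indices i, j, has exactly 2^n elements. -/
/-!
Fix a coordinate `i₀`. A nonzero vector whose coordinates share one absolute value has no zero
coordinate, so its line contains exactly one vector with `i₀`-th coordinate `1`. The coordinates of
that vector are all `±1`, and the signs away from `i₀` are arbitrary.
-/

/-- The lines in `K^ι` spanned by a vector whose coordinates share one absolute value, i.e. the
common intersection of the pieces `M i` of the projective space of `K^ι`. A point of projective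
space is encoded as a subspace of dimension one. -/
def equalAbsLines (K ι : Type*) [Field K] [LinearOrder K] : Set (Submodule K (ι → K)) :=
  {L | Module.finrank K L = 1 ∧
    ∃ v : ι → K, v ≠ 0 ∧ (∀ i j, |v i| = |v j|) ∧ L = Submodule.span K {v}}

/-- The vectors in `K^ι` with all coordinates `±1` and `i₀`-th coordinate `1`; they serve as
canonical spanning vectors of the lines in `equalAbsLines K ι`. -/
def normalizedSignVectors (K : Type*) {ι : Type*} [Field K] [LinearOrder K] (i₀ : ι) :
    Set (ι → K) :=
  {v | v i₀ = 1 ∧ ∀ i, |v i| = 1}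

theorem injOn_span_singleton_of_apply_eq_one {R M : Type*} [Semiring R] [AddCommMonoid M]
    [Module R M] (f : M →ₗ[R] R) :
    Set.InjOn (fun v : M => Submodule.span R {v}) {v | f v = 1} := by
  intro v (hv : f v = 1) w (hw : f w = 1) hspan
  obtain ⟨c, rfl⟩ : ∃ c : R, c • w = v := Submodule.mem_span_singleton.mp <|
    hspan.le (Submodule.mem_span_singleton_self v)
  have hc : c = 1 := by simpa [hw] using hv
  rw [hc, one_smul]

theorem apply_ne_zero_of_forall_abs_eq {ι G : Type*} [AddCommGroup G] [LinearOrder G]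
    [IsOrderedAddMonoid G] {v : ι → G} (hv : v ≠ 0) (habs : ∀ i j, |v i| = |v j|) (i : ι) :
    v i ≠ 0 := by
  obtain ⟨j, hj⟩ := Function.ne_iff.mp hv
  rwa [← abs_pos, habs i j, abs_pos]

section

variable {K ι : Type*} [Field K] [LinearOrder K] [IsStrictOrderedRing K]

theorem inv_smul_mem_normalizedSignVectors {v : ι → K} {i₀ : ι} (h₀ : v i₀ ≠ 0)
    (habs : ∀ i, |v i| = |v i₀|) : (v i₀)⁻¹ • v ∈ normalizedSignVectors K i₀ := by
  refine ⟨inv_mul_cancel₀ h₀, fun i => ?_⟩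
  rw [Pi.smul_apply, smul_eq_mul, abs_mul, abs_inv, habs i, inv_mul_cancel₀ (abs_ne_zero.mpr h₀)]

theorem span_singleton_mem_equalAbsLines {v : ι → K} {i₀ : ι}
    (hv : v ∈ normalizedSignVectors K i₀) : Submodule.span K {v} ∈ equalAbsLines K ι := by
  have hv₀ : v ≠ 0 := Function.ne_iff.mpr ⟨i₀, by simp [hv.1]⟩
  exact ⟨finrank_span_singleton hv₀, v, hv₀, fun i j => (hv.2 i).trans (hv.2 j).symm, rfl⟩

theorem image_span_normalizedSignVectors (i₀ : ι) :
    (fun v => Submodule.span K {v}) '' normalizedSignVectors K i₀ = equalAbsLines K ι := by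
  apply Set.Subset.antisymm
  · rintro _ ⟨v, hv, rfl⟩
    exact span_singleton_mem_equalAbsLines hv
  · rintro _ ⟨-, v, hv, habs, rfl⟩
    have h₀ : v i₀ ≠ 0 := apply_ne_zero_of_forall_abs_eq hv habs i₀
    exact ⟨(v i₀)⁻¹ • v, inv_smul_mem_normalizedSignVectors h₀ (habs · i₀),
      Submodule.span_singleton_smul_eq (inv_ne_zero h₀).isUnit v⟩

open scoped Classical in
theorem normalizedSignVectors_eq_filter_piFinset [Fintype ι] (i₀ : ι) :
    normalizedSignVectors K i₀ =
      {v ∈ Fintype.piFinset fun _ : ι => ({1, -1} : Finset K) | v i₀ = 1} := by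
  ext v
  simp [normalizedSignVectors, abs_eq, and_comm]

theorem ncard_normalizedSignVectors [Fintype ι] (i₀ : ι) :
    (normalizedSignVectors K i₀).ncard = 2 ^ (Fintype.card ι - 1) := by
  classical
  have card_signs : ({1, -1} : Finset K).card = 2 :=
    Finset.card_pair (neg_one_lt_zero.trans zero_lt_one).ne'
  rw [normalizedSignVectors_eq_filter_piFinset, Set.ncard_coe_finset,
    Fintype.card_filter_piFinset_const_eq_of_mem _ _ (Finset.mem_insert_self _ _), card_signs]

end

theorem card_equalAbs_lines_general (K ι : Type*) [Field K] [LinearOrder K]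
    [IsStrictOrderedRing K] [Fintype ι] [Nonempty ι] :
    (equalAbsLines K ι).ncard = 2 ^ (Fintype.card ι - 1) := by
  obtain ⟨i₀⟩ := ‹Nonempty ι›
  have hinj : Set.InjOn (fun v => Submodule.span K {v}) (normalizedSignVectors K i₀) := by
    apply (injOn_span_singleton_of_apply_eq_one (LinearMap.proj i₀)).mono
    exact fun v hv => hv.1
  rw [← image_span_normalizedSignVectors i₀, hinj.ncard_image, ncard_normalizedSignVectors]

/-- In the good ball decomposition of `ℝP^n` by
`M i = {[x₀ : … : xₙ] : |x_i| ≥ |x_j| for all j}`, the intersection of all the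
pieces — the set of lines in `ℝ^{n+1}` spanned by a nonzero vector all of whose
coordinates have the same absolute value — has exactly `2^n` elements. -/
theorem card_equalAbs_lines (n : ℕ) :
    Set.ncard {L : Submodule ℝ (Fin (n + 1) → ℝ) |
        Module.finrank ℝ L = 1 ∧
        ∃ v : Fin (n + 1) → ℝ, v ≠ 0 ∧ (∀ i j, |v i| = |v j|) ∧
          L = Submodule.span ℝ {v}} = 2 ^ n := by
  simpa [equalAbsLines] using card_equalAbs_lines_general ℝ (Fin (n + 1))
end

section
/- For every n ≥ 2 there exist closed subsets B_1, …, B_n of the unit sphere S^{n-1} ⊂ ℝ^n whose union is all of S^{n-1}, such that for every nonempty proper subset I ⊊ {1,…,n} the intersection ⋂_{i∈I} B_i is homeomorphic to the closed unit ball of the Euclidean space ℝ^{n-|I|}, and the total intersection ⋂_{i=1}^n B_i consists of exactly two points. -/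
/-!
Let `B i` be the set of unit vectors whose `i`-th coordinate is minimal. Then `⋂ i ∈ I, B i` is
the trace on the sphere of a closed convex cone: the vectors whose minimum is attained at every
index of `I`. In the space of vectors constant on `I`, of dimension `n - |I| + 1`, this cone has
nonempty interior, and it is not everything when `I` is proper. When `I` is everything, it is the
diagonal line, which meets the sphere in two antipodal points.

A closed convex cone `K` with nonempty interior always has an interior point `v` in its dual cone,
and `v ≠ 0` unless `K` is the whole space. Orthogonal projection along `v` is injective on the unit
vectors of `K`, since they all lie in the hemisphere around `v`, and it has the same image there as
on the unit ball of `K`, since a point of that ball can be pushed along `v` up to the sphere. That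
image is a convex body in the hyperplane orthogonal to `v`, hence a ball.
-/

open Metric Module Set
open scoped RealInnerProductSpace Topology

section Cone

theorem properCone_eq_univ_of_zero_mem_interior {E : Type*} [AddCommGroup E] [Module ℝ E]
    [TopologicalSpace E] [ContinuousSMul ℝ E] {K : ProperCone ℝ E}
    (h : (0 : E) ∈ interior (K : Set E)) : (K : Set E) = univ := by
  refine eq_univ_of_forall fun x ↦ ?_
  have hlim : Filter.Tendsto (fun r : ℝ ↦ r • x) (𝓝[>] 0) (𝓝 0) :=
    tendsto_nhdsWithin_of_tendsto_nhds (Continuous.tendsto' (by fun_prop) _ _ (zero_smul ℝ x))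
  obtain ⟨r, hrx, hr⟩ :=
    ((hlim.eventually (mem_interior_iff_mem_nhds.1 h)).and self_mem_nhdsWithin).exists
  exact (K.toPointedCone.smul_mem_iff hr).1 hrx

variable {E : Type*} [NormedAddCommGroup E]

theorem interior_closedBall_inter_nonempty [NormedSpace ℝ E] {K : ProperCone ℝ E}
    (hint : (interior (K : Set E)).Nonempty) :
    (interior (closedBall 0 1 ∩ (K : Set E))).Nonempty := by
  have hzero : (0 : E) ∈ closure (interior (K : Set E)) := by
    rw [K.convex.closure_interior_eq_closure_of_nonempty_interior hint]
    exact subset_closure (zero_mem K)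
  rw [interior_inter]
  exact mem_closure_iff.1 hzero _ isOpen_interior
    (ball_subset_interior_closedBall (mem_ball_self one_pos))

variable [InnerProductSpace ℝ E] [CompleteSpace E] {K : ProperCone ℝ E}

theorem innerDual_interior (hint : (interior (K : Set E)).Nonempty) :
    ProperCone.innerDual (interior (K : Set E)) = ProperCone.innerDual (K : Set E) := by
  refine le_antisymm (fun w hw ↦ ?_) (ProperCone.innerDual_le_innerDual interior_subset)
  have hsub : closure (interior (K : Set E)) ⊆ {x | 0 ≤ ⟪x, w⟫} :=
    closure_minimal hw (isClosed_le (by fun_prop) (by fun_prop))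
  rw [K.convex.closure_interior_eq_closure_of_nonempty_interior hint, K.isClosed.closure_eq] at hsub
  exact hsub

theorem interior_inter_innerDual_nonempty (hint : (interior (K : Set E)).Nonempty) :
    (interior (K : Set E) ∩ ProperCone.innerDual (K : Set E)).Nonempty := by
  by_contra hempty
  obtain ⟨f, u, hf_int, hf_dual⟩ := geometric_hahn_banach_open K.convex.interior isOpen_interior
    (ProperCone.innerDual (K : Set E)).convex
    (disjoint_iff_inter_eq_empty.2 (not_nonempty_iff_eq_empty.1 hempty))
  have hu : u ≤ 0 := by simpa using hf_dual 0 (zero_mem _)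
  obtain ⟨w, hf⟩ : ∃ w : E, ∀ x, f x = -⟪x, w⟫ :=
    ⟨-(InnerProductSpace.toDual ℝ E).symm f, fun x ↦ by
      rw [inner_neg_right, neg_neg, real_inner_comm, InnerProductSpace.toDual_symm_apply]⟩
  have hw : w ≠ 0 := by
    rintro rfl
    obtain ⟨a, ha⟩ := hint
    simpa [hf, hu.not_gt] using hf_int a ha
  have hw_dual : w ∈ ProperCone.innerDual (K : Set E) := by
    rw [← innerDual_interior hint]
    intro x hx
    rw [innerₗ_apply_apply, ← neg_nonpos, ← hf]
    exact ((hf_int x hx).trans_le hu).le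
  -- `f` is bounded below by `u` on the dual cone but tends to `-∞` along the ray through `w`.
  have hscaled : u ≤ f (((1 - u) / ‖w‖ ^ 2) • w) :=
    hf_dual _ (ProperCone.smul_mem _ hw_dual (div_nonneg (by linarith) (by positivity)))
  have hvalue : f (((1 - u) / ‖w‖ ^ 2) • w) = u - 1 := by
    rw [hf, real_inner_smul_left, real_inner_self_eq_norm_sq,
      div_mul_cancel₀ _ (by simpa using hw), neg_sub]
  linarith

end Cone

section ProjectionAlongDualVector

theorem exists_nonneg_norm_add_smul_eq_one {E : Type*} [NormedAddCommGroup E] [NormedSpace ℝ E]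
    {v x : E} (hv : v ≠ 0) (hx : ‖x‖ ≤ 1) : ∃ t : ℝ, 0 ≤ t ∧ ‖x + t • v‖ = 1 := by
  have hT : 0 ≤ 2 / ‖v‖ := by positivity
  have hlarge : 1 ≤ ‖x + (2 / ‖v‖) • v‖ := by
    have := norm_sub_norm_le ((2 / ‖v‖) • v) (-x)
    rw [norm_smul, Real.norm_of_nonneg hT, div_mul_cancel₀ _ (norm_ne_zero_iff.2 hv), norm_neg,
      sub_neg_eq_add, add_comm _ x] at this
    linarith
  obtain ⟨t, ht, hxt⟩ := intermediate_value_Icc hT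
    (f := fun t : ℝ ↦ ‖x + t • v‖) (by fun_prop) ⟨by simpa using hx, hlarge⟩
  exact ⟨t, ht.1, hxt⟩

variable {E : Type*} [NormedAddCommGroup E] [InnerProductSpace ℝ E]

theorem eq_of_sub_mem_span_singleton_of_norm_eq {v x y : E} (hnorm : ‖x‖ = ‖y‖)
    (hx : 0 ≤ ⟪x, v⟫) (hy : 0 ≤ ⟪y, v⟫) (hxy : x - y ∈ ℝ ∙ v) : x = y := by
  obtain ⟨t, ht⟩ := Submodule.mem_span_singleton.1 hxy
  have hprod : t * (⟪x, v⟫ + ⟪y, v⟫) = 0 := by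
    rw [← inner_add_left, ← inner_smul_right, ht, real_inner_add_sub_eq_zero_iff, hnorm]
  rcases mul_eq_zero.1 hprod with rfl | hsum
  · rwa [zero_smul, eq_comm, sub_eq_zero] at ht
  · have horth : ⟪x - y, v⟫ = 0 := by rw [inner_sub_left]; linarith
    rw [← sub_eq_zero, ← inner_self_eq_zero (𝕜 := ℝ)]
    nth_rw 2 [← ht]
    rw [inner_smul_right, horth, mul_zero]

variable {K : ProperCone ℝ E} {v : E}

theorem orthogonalProjectionOnto_image_sphere_inter (hv : v ≠ 0) (hvK : v ∈ K) :
    (ℝ ∙ v)ᗮ.orthogonalProjectionOnto '' (sphere 0 1 ∩ K) =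
      (ℝ ∙ v)ᗮ.orthogonalProjectionOnto '' (closedBall 0 1 ∩ K) := by
  refine (image_mono (inter_subset_inter_left _ sphere_subset_closedBall)).antisymm ?_
  rintro _ ⟨x, ⟨hx, hxK⟩, rfl⟩
  obtain ⟨t, ht, hxt⟩ := exists_nonneg_norm_add_smul_eq_one hv (mem_closedBall_zero_iff.1 hx)
  refine ⟨x + t • v, ⟨mem_sphere_zero_iff_norm.2 hxt, add_mem hxK (K.smul_mem hvK ht)⟩, ?_⟩
  rw [map_add, map_smul, Submodule.orthogonalProjectionOnto_orthogonalComplement_singleton_eq_zero,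
    smul_zero, add_zero]

theorem injOn_orthogonalProjectionOnto_sphere_inter [CompleteSpace E]
    (hdual : v ∈ ProperCone.innerDual (K : Set E)) :
    InjOn (ℝ ∙ v)ᗮ.orthogonalProjectionOnto (sphere 0 1 ∩ K) := by
  rintro x ⟨hx, hxK⟩ y ⟨hy, hyK⟩ hxy
  rw [mem_sphere_zero_iff_norm] at hx hy
  rw [← sub_eq_zero, ← map_sub, Submodule.orthogonalProjectionOnto_eq_zero_iff,
    Submodule.orthogonal_orthogonal] at hxy
  exact eq_of_sub_mem_span_singleton_of_norm_eq (hx.trans hy.symm) (hdual hxK) (hdual hyK) hxy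

theorem nonempty_homeomorph_image_sphere_inter [FiniteDimensional ℝ E]
    (hdual : v ∈ ProperCone.innerDual (K : Set E)) :
    Nonempty ((sphere (0 : E) 1 ∩ K : Set E) ≃ₜ
      ((ℝ ∙ v)ᗮ.orthogonalProjectionOnto '' (sphere 0 1 ∩ K) : Set _)) := by
  have : CompactSpace (sphere (0 : E) 1 ∩ K : Set E) :=
    isCompact_iff_compactSpace.1 ((isCompact_sphere 0 1).inter_right K.isClosed)
  have hcont := (ℝ ∙ v)ᗮ.orthogonalProjectionOnto.continuous.comp
    (continuous_subtype_val (p := (· ∈ sphere (0 : E) 1 ∩ K)))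
  have hemb := hcont.isClosedEmbedding (injOn_orthogonalProjectionOnto_sphere_inter hdual).injective
  exact ⟨hemb.isEmbedding.toHomeomorph.trans
    (.setCongr (by rw [range_comp, Subtype.range_coe]))⟩

end ProjectionAlongDualVector

section ConeSection

theorem nonempty_homeomorph_closedBall_of_convex {F : Type*} [NormedAddCommGroup F]
    [InnerProductSpace ℝ F] {d : ℕ} (b : OrthonormalBasis (Fin d) ℝ F) {C : Set F}
    (hconv : Convex ℝ C) (hcomp : IsCompact C) (hint : (interior C).Nonempty) :
    Nonempty (C ≃ₜ closedBall (0 : EuclideanSpace ℝ (Fin d)) 1) := by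
  obtain ⟨e, -, he, -⟩ := exists_homeomorph_image_interior_closure_frontier_eq_unitBall
    hconv hint hcomp.isBounded
  rw [hcomp.isClosed.closure_eq] at he
  have hb : b.repr '' closedBall 0 1 = closedBall 0 1 := by
    simpa only [map_zero] using b.repr.image_closedBall 0 1
  exact ⟨((e.image C).trans (.setCongr he)).trans
    ((b.repr.toHomeomorph.image _).trans (.setCongr hb))⟩

theorem nonempty_homeomorph_sphere_inter_properCone {E : Type*} [NormedAddCommGroup E]
    [InnerProductSpace ℝ E] {d : ℕ} (hd : finrank ℝ E = d + 1) {K : ProperCone ℝ E}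
    (hint : (interior (K : Set E)).Nonempty) (hK : (K : Set E) ≠ univ) :
    Nonempty ((sphere (0 : E) 1 ∩ K : Set E) ≃ₜ
      closedBall (0 : EuclideanSpace ℝ (Fin d)) 1) := by
  have : FiniteDimensional ℝ E := .of_finrank_eq_succ hd
  have : Fact (finrank ℝ E = d + 1) := ⟨hd⟩
  obtain ⟨v, hv_int, hv_dual⟩ := interior_inter_innerDual_nonempty hint
  have hv : v ≠ 0 := by
    rintro rfl
    exact hK (properCone_eq_univ_of_zero_mem_interior hv_int)
  let P := (ℝ ∙ v)ᗮ.orthogonalProjectionOnto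
  have hP : Function.Surjective P :=
    fun y ↦ ⟨y, Submodule.orthogonalProjectionOnto_mem_subspace_eq_self y⟩
  have hconv : Convex ℝ (P '' (closedBall 0 1 ∩ K)) :=
    ((convex_closedBall 0 1).inter K.convex).linear_image P.toLinearMap
  have hcomp : IsCompact (P '' (closedBall 0 1 ∩ K)) :=
    ((isCompact_closedBall 0 1).inter_right K.isClosed).image P.continuous
  have hPint : (interior (P '' (closedBall 0 1 ∩ K))).Nonempty :=
    ((interior_closedBall_inter_nonempty hint).image P).mono
      ((P.isOpenMap hP).image_interior_subset _)
  obtain ⟨e⟩ := nonempty_homeomorph_image_sphere_inter hv_dual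
  obtain ⟨e'⟩ := nonempty_homeomorph_closedBall_of_convex
    (OrthonormalBasis.fromOrthogonalSpanSingleton d hv) hconv hcomp hPint
  exact ⟨(e.trans (.setCongr
    (orthogonalProjectionOnto_image_sphere_inter hv (interior_subset hv_int)))).trans e'⟩

variable {E : Type*} [NormedAddCommGroup E] [NormedSpace ℝ E]

theorem nonempty_homeomorph_sphere_inter_comap {W : Submodule ℝ E} {K : ProperCone ℝ E}
    (hKW : (K : Set E) ⊆ W) :
    Nonempty ((sphere (0 : E) 1 ∩ K : Set E) ≃ₜ
      (sphere (0 : W) 1 ∩ K.comap W.subtypeL : Set W)) := by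
  have himage : ((↑) : W → E) '' (sphere 0 1 ∩ K.comap W.subtypeL) = sphere 0 1 ∩ K := by
    ext x
    constructor
    · rintro ⟨y, ⟨hy, hyK⟩, rfl⟩
      exact ⟨by simpa using hy, hyK⟩
    · rintro ⟨hx, hxK⟩
      exact ⟨⟨x, hKW hxK⟩, ⟨by simpa using hx, hxK⟩, rfl⟩
  exact ⟨((Topology.IsEmbedding.subtypeVal.homeomorphImage _).trans (.setCongr himage)).symm⟩

theorem sphere_inter_span_singleton {v : E} (hv : v ≠ 0) :
    sphere 0 1 ∩ (ℝ ∙ v : Set E) = {‖v‖⁻¹ • v, -(‖v‖⁻¹ • v)} := by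
  ext x
  constructor
  · rintro ⟨hx, hxv⟩
    obtain ⟨c, rfl⟩ := Submodule.mem_span_singleton.1 hxv
    rw [mem_sphere_zero_iff_norm, norm_smul] at hx
    have hc : |c| = ‖v‖⁻¹ := eq_inv_of_mul_eq_one_left hx
    rcases eq_or_eq_neg_of_abs_eq hc with rfl | rfl <;> simp
  · have hmem : ‖v‖⁻¹ • v ∈ ℝ ∙ v := Submodule.smul_mem _ _ (Submodule.mem_span_singleton_self v)
    rintro (rfl | rfl)
    · exact ⟨by simp [norm_smul, hv], hmem⟩
    · exact ⟨by simp [norm_smul, hv], neg_mem hmem⟩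

end ConeSection

section ArgminCone

variable {ι : Type*}

/-- The closed convex cone of vectors whose minimal coordinate is attained at every index of `I`;
its unit vectors are the intersection over `I` of the pieces of the decomposition. -/
def argminCone (I : Set ι) : ProperCone ℝ (EuclideanSpace ℝ ι) where
  carrier := {x | ∀ i ∈ I, ∀ k, x i ≤ x k}
  add_mem' hx hy i hi k := add_le_add (hx i hi k) (hy i hi k)
  zero_mem' _ _ _ := le_rfl
  smul_mem' c _ hx i hi k := mul_le_mul_of_nonneg_left (hx i hi k) c.2
  isClosed' := by
    have hle (i k : ι) : IsClosed {x : EuclideanSpace ℝ ι | x i ≤ x k} :=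
      isClosed_le (by fun_prop) (by fun_prop)
    simp only [ofPred_forall]
    exact isClosed_iInter fun i ↦ isClosed_iInter fun _ ↦ isClosed_iInter (hle i)

theorem mem_argminCone {I : Set ι} {x : EuclideanSpace ℝ ι} :
    x ∈ argminCone I ↔ ∀ i ∈ I, ∀ k, x i ≤ x k := Iff.rfl

/-- The vectors whose coordinates agree on `I`, the subspace in which `argminCone I` has nonempty
interior. -/
def constantOn (I : Set ι) : Submodule ℝ (EuclideanSpace ℝ ι) where
  carrier := {x | ∀ i ∈ I, ∀ j ∈ I, x i = x j}
  add_mem' hx hy i hi j hj := congrArg₂ (· + ·) (hx i hi j hj) (hy i hi j hj)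
  zero_mem' _ _ _ _ := rfl
  smul_mem' c _ hx i hi j hj := congrArg (c * ·) (hx i hi j hj)

theorem argminCone_subset_constantOn (I : Set ι) :
    (argminCone I : Set (EuclideanSpace ℝ ι)) ⊆ constantOn I :=
  fun _ hx i hi j hj ↦ (hx i hi j).antisymm (hx j hj i)

open scoped Classical in
/-- Coordinates on `constantOn I`: the common value on `I`, read off at `i₀ ∈ I`, and the values
outside `I`. -/
noncomputable def constantOnEquiv {I : Set ι} {i₀ : ι} (hi₀ : i₀ ∈ I) :
    constantOn I ≃ₗ[ℝ] ℝ × (↥Iᶜ → ℝ) where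
  toFun x := (x.1 i₀, fun j ↦ x.1 j)
  map_add' _ _ := rfl
  map_smul' _ _ := rfl
  invFun p := ⟨WithLp.toLp 2 fun i ↦ if hi : i ∈ I then p.1 else p.2 ⟨i, hi⟩,
    fun i hi j hj ↦ by simp [hi, hj]⟩
  left_inv x := by
    ext i
    by_cases hi : i ∈ I
    · simpa [hi] using x.2 i₀ hi₀ i hi
    · simp [hi]
  right_inv p := by
    ext j
    · simp [hi₀]
    · simp [show j.1 ∉ I from j.2]

theorem finrank_constantOn [Fintype ι] {I : Finset ι} (hI : I.Nonempty) :
    finrank ℝ (constantOn (I : Set ι)) = Fintype.card ι - I.card + 1 := by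
  classical
  obtain ⟨i₀, hi₀⟩ := hI
  rw [(constantOnEquiv (I := (I : Set ι)) hi₀).finrank_eq, finrank_prod, finrank_self,
    finrank_fintype_fun_eq_card, add_comm, Fintype.card_compl_set]
  simp

theorem interior_argminCone_comap_nonempty [Finite ι] {I : Set ι} (hI : I.Nonempty) :
    (interior ((argminCone I).comap (constantOn I).subtypeL : Set (constantOn I))).Nonempty := by
  obtain ⟨i₀, hi₀⟩ := hI
  have hopen : IsOpen {x : constantOn I | ∀ j ∉ I, x.1 i₀ < x.1 j} := by
    simp only [ofPred_forall]
    exact isOpen_iInter_of_finite fun j ↦ isOpen_iInter_of_finite fun _ ↦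
      isOpen_lt (by fun_prop) (by fun_prop)
  have hsub : {x : constantOn I | ∀ j ∉ I, x.1 i₀ < x.1 j} ⊆
      (argminCone I).comap (constantOn I).subtypeL := fun x hx i hi k ↦ by
    by_cases hk : k ∈ I
    · exact (x.2 i hi k hk).le
    · exact (x.2 i hi i₀ hi₀).trans_le (hx k hk).le
  refine ⟨(constantOnEquiv hi₀).symm (0, 1), interior_maximal hsub hopen fun j hj ↦ ?_⟩
  simp [constantOnEquiv, hi₀, hj]

theorem argminCone_comap_ne_univ {I : Set ι} (hI : I.Nonempty) (hI' : I ≠ univ) :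
    ((argminCone I).comap (constantOn I).subtypeL : Set (constantOn I)) ≠ univ := by
  obtain ⟨i₀, hi₀⟩ := hI
  obtain ⟨j, hj⟩ := (ne_univ_iff_exists_notMem I).1 hI'
  intro huniv
  have hmem : (constantOnEquiv hi₀).symm (0, -1) ∈
      ((argminCone I).comap (constantOn I).subtypeL : Set (constantOn I)) := huniv ▸ mem_univ _
  have := hmem i₀ hi₀ j
  norm_num [constantOnEquiv, hi₀, hj] at this

theorem coe_argminCone_univ [Nonempty ι] :
    (argminCone (univ : Set ι) : Set (EuclideanSpace ℝ ι)) = ℝ ∙ WithLp.toLp 2 (1 : ι → ℝ) := by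
  ext x
  rw [SetLike.mem_coe, SetLike.mem_coe, mem_argminCone, Submodule.mem_span_singleton]
  constructor
  · intro hx
    obtain ⟨i₀⟩ := ‹Nonempty ι›
    refine ⟨x i₀, ?_⟩
    ext i
    simpa using (hx i₀ (mem_univ i₀) i).antisymm (hx i (mem_univ i) i₀)
  · rintro ⟨c, rfl⟩
    simp

variable [Fintype ι]

/-- The `i`-th piece of the decomposition: the unit vectors whose `i`-th coordinate is minimal. -/
def argminPiece (i : ι) : Set (EuclideanSpace ℝ ι) := sphere 0 1 ∩ argminCone {i}

theorem isClosed_argminPiece (i : ι) : IsClosed (argminPiece i) :=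
  isClosed_sphere.inter (argminCone {i}).isClosed

theorem iUnion_argminPiece [Nonempty ι] :
    ⋃ i, argminPiece i = sphere (0 : EuclideanSpace ℝ ι) 1 := by
  refine (iUnion_subset fun i ↦ inter_subset_left).antisymm fun x hx ↦ ?_
  obtain ⟨i, hi⟩ := Finite.exists_min (x ·)
  exact mem_iUnion.2 ⟨i, hx, by simpa [mem_argminCone] using hi⟩

theorem biInter_argminPiece {I : Set ι} (hI : I.Nonempty) :
    ⋂ i ∈ I, argminPiece i = sphere 0 1 ∩ argminCone I := by
  have hcone : (argminCone I : Set (EuclideanSpace ℝ ι)) = ⋂ i ∈ I, argminCone {i} := by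
    ext x
    simp [mem_argminCone]
  simp only [argminPiece, hcone, inter_biInter hI]

theorem nonempty_homeomorph_biInter_argminPiece {I : Finset ι} (hI : I.Nonempty)
    (hI' : I ≠ Finset.univ) {d : ℕ} (hd : Fintype.card ι - I.card = d) :
    Nonempty ((⋂ i ∈ I, argminPiece i) ≃ₜ closedBall (0 : EuclideanSpace ℝ (Fin d)) 1) := by
  have hinter : ⋂ i ∈ I, argminPiece i = sphere 0 1 ∩ argminCone (I : Set ι) :=
    biInter_argminPiece (Finset.coe_nonempty.2 hI)
  obtain ⟨e⟩ := nonempty_homeomorph_sphere_inter_comap (argminCone_subset_constantOn (I : Set ι))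
  obtain ⟨e'⟩ := nonempty_homeomorph_sphere_inter_properCone
    (E := constantOn (I : Set ι)) (hd ▸ finrank_constantOn hI)
    (interior_argminCone_comap_nonempty (Finset.coe_nonempty.2 hI))
    (argminCone_comap_ne_univ (Finset.coe_nonempty.2 hI) (mt Finset.coe_eq_univ.1 hI'))
  exact ⟨(Homeomorph.setCongr hinter).trans (e.trans e')⟩

theorem exists_iInter_argminPiece_eq_pair [Nonempty ι] :
    ∃ p q : EuclideanSpace ℝ ι, p ≠ q ∧ ⋂ i, argminPiece i = {p, q} := by
  have hone : WithLp.toLp 2 (1 : ι → ℝ) ≠ 0 := by simp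
  have : IsAddTorsionFree (EuclideanSpace ℝ ι) := .of_module_rat _
  rw [← biInter_univ, biInter_argminPiece univ_nonempty, coe_argminCone_univ,
    sphere_inter_span_singleton hone]
  exact ⟨_, _, self_ne_neg.2 (smul_ne_zero (by simp) hone), rfl⟩

end ArgminCone

/-- The sphere `S^{n-1}` admits a good ball decomposition into `n` closed pieces:
each intersection over a nonempty proper index set `I` is homeomorphic to the closed
unit ball of `ℝ^{n-|I|}`, and the intersection of all pieces is exactly two points. -/
theorem sphere_goodBallDecomposition (n : ℕ) (hn : 2 ≤ n) :
    ∃ B : Fin n → Set (EuclideanSpace ℝ (Fin n)),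
      (∀ i, IsClosed (B i)) ∧
      (⋃ i, B i) = Metric.sphere (0 : EuclideanSpace ℝ (Fin n)) 1 ∧
      (∀ I : Finset (Fin n), I.Nonempty → I ≠ Finset.univ →
        Nonempty ((⋂ i ∈ I, B i) ≃ₜ
          (Metric.closedBall (0 : EuclideanSpace ℝ (Fin (n - I.card))) 1))) ∧
      ∃ p q : EuclideanSpace ℝ (Fin n), p ≠ q ∧ (⋂ i, B i) = {p, q} := by
  have : Nonempty (Fin n) := ⟨⟨0, by omega⟩⟩
  exact ⟨argminPiece, isClosed_argminPiece, iUnion_argminPiece,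
    fun I hI hI' ↦ nonempty_homeomorph_biInter_argminPiece hI hI' (by rw [Fintype.card_fin]),
    exists_iInter_argminPiece_eq_pair⟩
end

section
/- Let E be a real vector space, let v : Fin (n+1) → E be an affinely independent family of points, and let c = (n+1)⁻¹ • ∑_{j} v j be its centroid. For each i, let C_i = convexHull ℝ ({c} ∪ {v j : j ≠ i}). Then ⋃_{i} C_i = convexHull ℝ (Set.range v); that is, the cones from the barycenter over the facets of the simplex cover the whole simplex. -/
/-!
Let `x` and `c` be convex combinations of the same points, with weights `w` and `u`. Subtract from
`w` the largest multiple `θ u` that leaves all weights nonnegative: some weight, say that of `a`,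
becomes zero, so `x = θ c + ∑ y ≠ a, (w y - θ u y) y` lies in the cone with apex `c` over the
points other than `a`. Hence the cones cover the hull for every apex `c` in it.
-/

section

variable {𝕜 E ι : Type*} [Field 𝕜] [LinearOrder 𝕜] [IsStrictOrderedRing 𝕜]
  [AddCommGroup E] [Module 𝕜 E]

theorem exists_nonneg_forall_mul_le_and_mul_eq {t : Finset ι} {u w : ι → 𝕜}
    (hu : ∀ i ∈ t, 0 ≤ u i) (hw : ∀ i ∈ t, 0 ≤ w i) (hpos : ∃ i ∈ t, 0 < u i) :
    ∃ θ, 0 ≤ θ ∧ (∀ i ∈ t, θ * u i ≤ w i) ∧ ∃ i ∈ t, θ * u i = w i := by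
  obtain ⟨i, hi, hmin⟩ :=
    (t.filter (0 < u ·)).exists_min_image (fun i ↦ w i / u i) (by simpa [Finset.Nonempty])
  obtain ⟨hit, hui⟩ := Finset.mem_filter.1 hi
  refine ⟨w i / u i, div_nonneg (hw i hit) hui.le, fun j hj ↦ ?_,
    i, hit, div_mul_cancel₀ _ hui.ne'⟩
  obtain huj | huj := (hu j hj).eq_or_lt
  · simpa [← huj] using hw j hj
  · exact (le_div_iff₀ huj).1 (hmin j (Finset.mem_filter.2 ⟨hj, huj⟩))

theorem smul_add_sum_smul_mem_of_convex {s : Set E} (hs : Convex 𝕜 s) {c : E} (hc : c ∈ s)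
    {t : Finset ι} {θ : 𝕜} {w : ι → 𝕜} {z : ι → E} (hθ : 0 ≤ θ) (hw : ∀ i ∈ t, 0 ≤ w i)
    (hsum : θ + ∑ i ∈ t, w i = 1) (hz : ∀ i ∈ t, z i ∈ s) :
    θ • c + ∑ i ∈ t, w i • z i ∈ s := by
  have hmem := hs.sum_mem (t := t.insertNone) (w := fun o ↦ o.elim θ w) (z := fun o ↦ o.elim c z)
    (Finset.forall_mem_insertNone.2 ⟨hθ, hw⟩) (by simpa using hsum)
    (Finset.forall_mem_insertNone.2 ⟨hc, hz⟩)
  simpa using hmem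

theorem exists_mem_convexHull_insert_finset_sdiff_singleton {t : Finset E} {c x : E}
    (hc : c ∈ convexHull 𝕜 (t : Set E)) (hx : x ∈ convexHull 𝕜 (t : Set E)) :
    ∃ a ∈ t, x ∈ convexHull 𝕜 (insert c (t \ {a} : Set E)) := by
  classical
  obtain ⟨u, hu_nonneg, hu_sum, hu_c⟩ := Finset.mem_convexHull'.1 hc
  obtain ⟨w, hw_nonneg, hw_sum, rfl⟩ := Finset.mem_convexHull'.1 hx
  have hu_pos : ∃ y ∈ t, 0 < u y := Finset.exists_lt_of_sum_lt (by simp [hu_sum])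
  obtain ⟨θ, hθ, hle, a, ha, hθa⟩ :=
    exists_nonneg_forall_mul_le_and_mul_eq hu_nonneg hw_nonneg hu_pos
  refine ⟨a, ha, ?_⟩
  have hsum : θ + ∑ y ∈ t.erase a, (w y - θ * u y) = 1 := by
    rw [Finset.sum_erase _ (by simp [hθa]), Finset.sum_sub_distrib, ← Finset.mul_sum, hu_sum,
      hw_sum]
    ring
  have hx_eq : ∑ y ∈ t, w y • y = θ • c + ∑ y ∈ t.erase a, (w y - θ * u y) • y := by
    rw [Finset.sum_erase _ (by simp [hθa])]
    simp only [sub_smul, mul_smul, Finset.sum_sub_distrib, ← Finset.smul_sum, hu_c]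
    abel
  rw [hx_eq]
  refine smul_add_sum_smul_mem_of_convex (convex_convexHull 𝕜 _)
    (subset_convexHull 𝕜 _ (Set.mem_insert c _)) hθ
    (fun y hy ↦ sub_nonneg.2 (hle y (Finset.mem_of_mem_erase hy))) hsum
    (fun y hy ↦ subset_convexHull 𝕜 _ (Set.mem_insert_of_mem c ?_))
  simpa [and_comm] using hy

theorem exists_mem_convexHull_insert_sdiff_singleton {s : Set E} {c x : E}
    (hc : c ∈ convexHull 𝕜 s) (hx : x ∈ convexHull 𝕜 s) :
    ∃ a ∈ s, x ∈ convexHull 𝕜 (insert c (s \ {a})) := by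
  classical
  have hfinite := convexHull_eq_union_convexHull_finite_subsets (R := 𝕜) s
  obtain ⟨t₁, ht₁, hct₁⟩ := Set.mem_iUnion₂.1 (hfinite ▸ hc)
  obtain ⟨t₂, ht₂, hxt₂⟩ := Set.mem_iUnion₂.1 (hfinite ▸ hx)
  have hts : ((t₁ ∪ t₂ : Finset E) : Set E) ⊆ s := by
    simpa only [Finset.coe_union] using Set.union_subset ht₁ ht₂
  obtain ⟨a, ha, hxa⟩ := exists_mem_convexHull_insert_finset_sdiff_singleton (t := t₁ ∪ t₂)
    (convexHull_mono (by simp) hct₁) (convexHull_mono (by simp) hxt₂)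
  exact ⟨a, hts ha,
    convexHull_mono (Set.insert_subset_insert (Set.sdiff_subset_sdiff_left hts)) hxa⟩

theorem inv_card_smul_sum_mem_convexHull_range [Fintype ι] [Nonempty ι] (v : ι → E) :
    (Fintype.card ι : 𝕜)⁻¹ • ∑ i, v i ∈ convexHull 𝕜 (Set.range v) := by
  have hmem := Finset.univ.centerMass_mem_convexHull (R := 𝕜) (w := fun _ : ι ↦ 1) (z := v)
    (fun _ _ ↦ zero_le_one) (by simp [Fintype.card_pos]) (fun i _ ↦ Set.mem_range_self i)
  simpa [Finset.centerMass] using hmem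

theorem iUnion_cones_eq_simplex_general (v : ι → E) {c : E}
    (hc : c ∈ convexHull 𝕜 (Set.range v)) :
    (⋃ i, convexHull 𝕜 (insert c (v '' {j | j ≠ i}))) = convexHull 𝕜 (Set.range v) := by
  refine Set.Subset.antisymm (Set.iUnion_subset fun i ↦ ?_) fun x hx ↦ ?_
  · exact convexHull_min
      (Set.insert_subset hc ((Set.image_subset_range v _).trans (subset_convexHull 𝕜 _)))
      (convex_convexHull 𝕜 _)
  · obtain ⟨_, ⟨i, rfl⟩, hxi⟩ := exists_mem_convexHull_insert_sdiff_singleton hc hx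
    have hfacet : Set.range v \ {v i} ⊆ v '' {j | j ≠ i} := by
      rintro _ ⟨⟨j, rfl⟩, hj⟩
      exact ⟨j, ne_of_apply_ne v hj, rfl⟩
    exact Set.mem_iUnion.2 ⟨i, convexHull_mono (Set.insert_subset_insert hfacet) hxi⟩

end

/-- The cones from the barycenter of a simplex over its facets cover the simplex:
if `v` is an affinely independent family of `n+1` points with centroid `c`, then the
union over `i` of the convex hulls of `{c} ∪ {v j : j ≠ i}` is the convex hull of the
whole vertex set. -/
theorem iUnion_cones_eq_simplex {E : Type*} [AddCommGroup E] [Module ℝ E] {n : ℕ}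
    (v : Fin (n + 1) → E) (hv : AffineIndependent ℝ v)
    (c : E) (hc : c = ((n : ℝ) + 1)⁻¹ • ∑ j, v j) :
    (⋃ i, convexHull ℝ (insert c (v '' {j | j ≠ i}))) = convexHull ℝ (Set.range v) :=
  iUnion_cones_eq_simplex_general v <| by
    simpa [hc] using inv_card_smul_sum_mem_convexHull_range (𝕜 := ℝ) v
end

section
/- Let E be a real vector space, let v : Fin (n+1) → E be an affinely independent family of points, and let c = (n+1)⁻¹ • ∑_{j} v j be its centroid. Then for each index i, the cone C_i = convexHull ℝ ({c} ∪ {v j : j ≠ i}) equals the set of points of the simplex whose i-th barycentric coordinate is minimal: C_i = { ∑_j t_j • v j : t_j ≥ 0 for all j, ∑_j t_j = 1, and t_i ≤ t_j for all j }. -/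
/-!
Barycentric coordinates reduce the claim to the standard simplex, since taking convex hulls commutes
with the linear map `t ↦ ∑ j, t j • v j`. There, let the apex have weights `w` with `0 < w i`. The
inequalities `t i * w j ≤ t j * w i` hold at the apex and at the vertices other than the `i`-th, and
cut out a convex set. Conversely, given these inequalities, subtracting `(t i / w i) • w` from `t`
kills the `i`-th coordinate and keeps the others nonnegative, so `t` is a convex combination of the
apex and the vertices other than the `i`-th. The centroid is the apex with constant weights.
-/

theorem smul_add_sum_smul_mem_convexHull_insert {𝕜 ι E : Type*} [Field 𝕜] [LinearOrder 𝕜]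
    [IsStrictOrderedRing 𝕜] [AddCommGroup E] [Module 𝕜 E] {x : E} {s : Set E} {z : ι → E}
    {I : Finset ι} {a : 𝕜} {b : ι → 𝕜} (ha : 0 ≤ a) (hb : ∀ j ∈ I, 0 ≤ b j)
    (hab : a + ∑ j ∈ I, b j = 1) (hz : ∀ j ∈ I, z j ∈ s) :
    a • x + ∑ j ∈ I, b j • z j ∈ convexHull 𝕜 (insert x s) := by
  have mem : ∑ o ∈ I.insertNone, o.elim a b • o.elim x z ∈ convexHull 𝕜 (insert x s) := by
    refine (convex_convexHull 𝕜 _).sum_mem (Finset.forall_mem_insertNone.2 ⟨ha, hb⟩) ?_ ?_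
    · simpa using hab
    · exact Finset.forall_mem_insertNone.2 ⟨subset_convexHull 𝕜 _ (Set.mem_insert x s),
        fun j hj => subset_convexHull 𝕜 _ (Set.mem_insert_of_mem x (hz j hj))⟩
  simpa using mem

theorem sum_smul_eq_div_smul_sum_add_sum_compl {𝕜 ι M : Type*} [Field 𝕜] [AddCommGroup M]
    [Module 𝕜 M] [Fintype ι] [DecidableEq ι] {w : ι → 𝕜} {i : ι} (hwi : w i ≠ 0) (t : ι → 𝕜)
    (z : ι → M) :
    ∑ j, t j • z j =
      (t i / w i) • ∑ j, w j • z j + ∑ j ∈ {i}ᶜ, (t j - t i / w i * w j) • z j := by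
  have coeff_i : t i - t i / w i * w i = 0 := by rw [div_mul_cancel₀ _ hwi, sub_self]
  have residual : ∑ j, t j • z j - (t i / w i) • ∑ j, w j • z j =
      ∑ j, (t j - t i / w i * w j) • z j := by
    simp only [sub_smul, mul_smul, Finset.sum_sub_distrib, Finset.smul_sum]
  rw [Fintype.sum_eq_add_sum_compl i fun j => (t j - t i / w i * w j) • z j, coeff_i, zero_smul,
    zero_add] at residual
  rw [← residual, add_sub_cancel]

section StdSimplex

variable {𝕜 ι : Type*} [Fintype ι]

section OrderedRing

variable [CommRing 𝕜] [PartialOrder 𝕜] [IsOrderedRing 𝕜]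

/-- The part of the standard simplex in which the ratio `t j / w j` is smallest at `j = i`, with
denominators cleared so that vanishing weights `w j` are allowed. For `w` in the simplex with
`0 < w i`, it is the cone with apex `w` over the facet opposite the `i`-th vertex. -/
def stdSimplexMinRatio (w : ι → 𝕜) (i : ι) : Set (ι → 𝕜) :=
  {t ∈ stdSimplex 𝕜 ι | ∀ j, t i * w j ≤ t j * w i}

theorem convex_stdSimplexMinRatio (w : ι → 𝕜) (i : ι) : Convex 𝕜 (stdSimplexMinRatio w i) := by
  rintro t ⟨ht, hti⟩ s ⟨hs, hsi⟩ a b ha hb hab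
  refine ⟨convex_stdSimplex 𝕜 ι ht hs ha hb hab, fun j => ?_⟩
  calc (a * t i + b * s i) * w j = a * (t i * w j) + b * (s i * w j) := by ring
    _ ≤ a * (t j * w i) + b * (s j * w i) := by
      gcongr a * ?_ + b * ?_
      exacts [hti j, hsi j]
    _ = (a * t j + b * s j) * w i := by ring

theorem single_mem_stdSimplexMinRatio [DecidableEq ι] {w : ι → 𝕜} {i k : ι} (hwi : 0 ≤ w i)
    (hk : k ≠ i) : Pi.single k 1 ∈ stdSimplexMinRatio w i := by
  refine ⟨single_mem_stdSimplex 𝕜 k, fun j => ?_⟩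
  rw [Pi.single_eq_of_ne hk.symm, zero_mul]
  exact mul_nonneg ((single_mem_stdSimplex 𝕜 k).1 j) hwi

end OrderedRing

variable [Field 𝕜] [LinearOrder 𝕜] [IsStrictOrderedRing 𝕜] [DecidableEq ι] {w : ι → 𝕜} {i : ι}

theorem stdSimplexMinRatio_subset_convexHull (hw : w ∈ stdSimplex 𝕜 ι) (hwi : 0 < w i) :
    stdSimplexMinRatio w i ⊆
      convexHull 𝕜 (insert w ((fun j => Pi.single j (1 : 𝕜)) '' {j | j ≠ i})) := by
  rintro t ⟨⟨ht_nonneg, ht_sum⟩, hti⟩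
  have decomposition :
      t = (t i / w i) • w + ∑ j ∈ {i}ᶜ, (t j - t i / w i * w j) • Pi.single j (1 : 𝕜) := by
    simpa only [← pi_eq_sum_univ'] using
      sum_smul_eq_div_smul_sum_add_sum_compl hwi.ne' t fun j => Pi.single j (1 : 𝕜)
  have weights_sum : t i / w i + ∑ j ∈ {i}ᶜ, (t j - t i / w i * w j) = 1 := by
    simpa only [smul_eq_mul, mul_one, hw.2, ht_sum] using
      (sum_smul_eq_div_smul_sum_add_sum_compl hwi.ne' t fun _ => (1 : 𝕜)).symm
  have weights_nonneg (j : ι) : 0 ≤ t j - t i / w i * w j := by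
    rw [sub_nonneg, div_mul_eq_mul_div, div_le_iff₀ hwi]
    exact hti j
  rw [decomposition]
  exact smul_add_sum_smul_mem_convexHull_insert (div_nonneg (ht_nonneg i) hwi.le)
    (fun j _ => weights_nonneg j) weights_sum
    fun j hj => Set.mem_image_of_mem _ (by simpa using hj)

theorem convexHull_insert_single_image_ne (hw : w ∈ stdSimplex 𝕜 ι) (hwi : 0 < w i) :
    convexHull 𝕜 (insert w ((fun j => Pi.single j (1 : 𝕜)) '' {j | j ≠ i})) =
      stdSimplexMinRatio w i := by
  refine (convexHull_min ?_ (convex_stdSimplexMinRatio w i)).antisymm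
    (stdSimplexMinRatio_subset_convexHull hw hwi)
  rintro t (rfl | ⟨k, hk, rfl⟩)
  · exact ⟨hw, fun j => (mul_comm _ _).le⟩
  · exact single_mem_stdSimplexMinRatio hwi.le hk

end StdSimplex

theorem cone_eq_minimal_barycentric_general {𝕜 ι E : Type*} [Field 𝕜] [LinearOrder 𝕜]
    [IsStrictOrderedRing 𝕜] [Fintype ι] [AddCommGroup E] [Module 𝕜 E] (v : ι → E) {w : ι → 𝕜}
    (hw : w ∈ stdSimplex 𝕜 ι) {i : ι} (hwi : 0 < w i) :
    convexHull 𝕜 (insert (∑ j, w j • v j) (v '' {j | j ≠ i})) =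
      {x : E | ∃ t : ι → 𝕜, (∀ j, 0 ≤ t j) ∧ (∑ j, t j) = 1 ∧
        (∀ j, t i * w j ≤ t j * w i) ∧ x = ∑ j, t j • v j} := by
  classical
  have image_generators : insert (∑ j, w j • v j) (v '' {j | j ≠ i}) =
      Fintype.linearCombination 𝕜 v ''
        insert w ((fun j => Pi.single j (1 : 𝕜)) '' {j | j ≠ i}) := by
    simp [Set.image_insert_eq, Set.image_image, Fintype.linearCombination_apply]
  rw [image_generators, ← LinearMap.image_convexHull, convexHull_insert_single_image_ne hw hwi]
  ext x
  simp [stdSimplexMinRatio, stdSimplex, Fintype.linearCombination_apply, and_assoc, eq_comm]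

/-- Barycentric characterization of the cone from the barycenter over a facet:
the convex hull of `{c} ∪ {v j : j ≠ i}`, where `c` is the centroid of an affinely
independent family `v`, is exactly the set of points of the simplex whose `i`-th
barycentric coordinate is minimal. -/
theorem cone_eq_minimal_barycentric {E : Type*} [AddCommGroup E] [Module ℝ E] {n : ℕ}
    (v : Fin (n + 1) → E) (hv : AffineIndependent ℝ v)
    (c : E) (hc : c = ((n : ℝ) + 1)⁻¹ • ∑ j, v j) (i : Fin (n + 1)) :
    convexHull ℝ (insert c (v '' {j | j ≠ i})) =
      {x : E | ∃ t : Fin (n + 1) → ℝ, (∀ j, 0 ≤ t j) ∧ (∑ j, t j) = 1 ∧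
        (∀ j, t i ≤ t j) ∧ x = ∑ j, t j • v j} := by
  have hn : 0 < ((n : ℝ) + 1)⁻¹ := by positivity
  simpa [hc, Finset.smul_sum, hn] using cone_eq_minimal_barycentric_general v
    (w := fun _ => ((n : ℝ) + 1)⁻¹) ⟨fun _ => hn.le, by simp [field]⟩ (i := i) hn
end

section
/- Let n ≥ 2, let S be a topological space, let D : Fin n → Set S be a family of pairwise disjoint closed subsets of S, let M be a type and M_• : Fin n → Set M an arbitrary family of subsets. For each i ∈ Fin n (with indices taken modulo n, i.e. using addition in Fin n) define W_i = (M_i ×ˢ closure (S \ D i)) ∪ (M_{i+1} ×ˢ D_{i+1}) ⊆ M × S. Then for every nonempty subset I ⊆ Fin n: ⋂_{i∈I} W_i equals the union of the following three sets: (1) (⋂_{i∈I} M_i) ×ˢ closure (S \ ⋃_{i∈I} D i); (2) ⋃ over those i ∈ I with i+1 ∉ I of ((⋂_{j ∈ (I \ {i}) ∪ {i+1}} M_j) ×ˢ D_{i+1}); (3) ⋃ over those i ∈ I with i+1 ∈ I of ((⋂_{j ∈ I \ {i}} M_j) ×ˢ frontier (D_{i+1})). -/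
open scoped Function

/-!
Write `Cᵢ = closure (Dᵢ)ᶜ`, so that `Wᵢ = Aᵢ ∪ Bᵢ` with `Aᵢ = Mᵢ ×ˢ Cᵢ` and
`Bᵢ = Mᵢ₊₁ ×ˢ Dᵢ₊₁`. The `Bᵢ` are pairwise disjoint, so expanding `⋂ i ∈ I, (Aᵢ ∪ Bᵢ)` leaves
only the terms with at most one factor `Bₚ`, and each term is a product set that can be computed
factor by factor. In the fibre, `⋂ i ∈ I, Cᵢ = closure (⋃ i ∈ I, Dᵢ)ᶜ`. Moreover `Dₚ₊₁` lies in
`Cᵢ` for every `i ≠ p + 1`, while it meets `Cₚ₊₁` in its frontier; hence the case distinction on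
whether `p + 1 ∈ I`.
-/

section SetAlgebra

open Set

variable {ι α β : Type*}

theorem biInter_union_of_pairwiseDisjoint {I : Set ι} (A : ι → Set α) {B : ι → Set α}
    (hB : I.PairwiseDisjoint B) :
    ⋂ i ∈ I, (A i ∪ B i) = (⋂ i ∈ I, A i) ∪ ⋃ p ∈ I, B p ∩ ⋂ i ∈ I \ {p}, A i := by
  ext x
  simp only [mem_iInter, mem_union, mem_iUnion, mem_inter_iff, mem_sdiff, mem_singleton_iff,
    exists_prop]
  constructor
  · intro hx
    by_cases hA : ∀ i ∈ I, x ∈ A i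
    · exact .inl hA
    · push Not at hA
      obtain ⟨p, hp, hxp⟩ := hA
      have hxB : x ∈ B p := (hx p hp).resolve_left hxp
      refine .inr ⟨p, hp, hxB, fun i ⟨hi, hip⟩ ↦ (hx i hi).resolve_right fun hxi ↦ ?_⟩
      exact disjoint_left.mp (hB hi hp hip) hxi hxB
  · rintro (hA | ⟨p, -, hxB, hA⟩) i hi
    · exact .inl (hA i hi)
    · rcases eq_or_ne i p with rfl | hip
      · exact .inr hxB
      · exact .inl (hA i ⟨hi, hip⟩)

theorem biInter_prod_eq_biInter_prod_biInter (I : Set ι) (A : ι → Set α) (B : ι → Set β) :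
    ⋂ i ∈ I, A i ×ˢ B i = (⋂ i ∈ I, A i) ×ˢ ⋂ i ∈ I, B i := by
  ext x
  simp only [mem_iInter, mem_prod, forall_and]

theorem biUnion_sep_not_union_biUnion_sep (I : Set ι) (p : ι → Prop) (A : ι → Set α) :
    (⋃ i ∈ {i ∈ I | ¬ p i}, A i) ∪ ⋃ i ∈ {i ∈ I | p i}, A i = ⋃ i ∈ I, A i := by
  rw [← biUnion_union, ← sep_or]
  simp only [em', sep_true]

end SetAlgebra

section DisjointClosedSets

open Set

variable {ι X : Type*} [TopologicalSpace X] {D : ι → Set X}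

theorem interior_iUnion_of_pairwise_disjoint (hfin : LocallyFinite D)
    (hclosed : ∀ i, IsClosed (D i)) (hdisj : Pairwise (Disjoint on D)) :
    interior (⋃ i, D i) = ⋃ i, interior (D i) := by
  refine Subset.antisymm (fun x hx ↦ ?_) (iUnion_subset fun i ↦ interior_mono (subset_iUnion D i))
  obtain ⟨k, hxk⟩ := mem_iUnion.mp (interior_subset hx)
  refine mem_iUnion.mpr ⟨k, mem_interior_iff_mem_nhds.mpr ?_⟩
  filter_upwards [mem_interior_iff_mem_nhds.mp hx, hfin.iInter_compl_mem_nhds hclosed x]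
    with y hy hy_avoids
  obtain ⟨j, hyj⟩ := mem_iUnion.mp hy
  have hxj : x ∈ D j := by
    by_contra hxj
    exact mem_iInter₂.mp hy_avoids j hxj hyj
  have hjk : j = k := hdisj.eq (not_disjoint_iff.mpr ⟨x, hxj, hxk⟩)
  exact hjk ▸ hyj

theorem closure_compl_biUnion_of_pairwise_disjoint (hfin : LocallyFinite D)
    (hclosed : ∀ i, IsClosed (D i)) (hdisj : Pairwise (Disjoint on D)) (I : Set ι) :
    closure (⋃ i ∈ I, D i)ᶜ = ⋂ i ∈ I, closure (D i)ᶜ := by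
  have hinterior : interior (⋃ i : I, D i) = ⋃ i : I, interior (D i) :=
    interior_iUnion_of_pairwise_disjoint (hfin.comp_injective Subtype.val_injective)
      (fun i ↦ hclosed i) (hdisj.comp_of_injective Subtype.val_injective)
  rw [closure_compl, biUnion_eq_iUnion, biInter_eq_iInter, hinterior, compl_iUnion]
  simp only [closure_compl]

theorem subset_biInter_closure_compl_of_notMem (hdisj : Pairwise (Disjoint on D))
    {J : Set ι} {k : ι} (hk : k ∉ J) : D k ⊆ ⋂ j ∈ J, closure (D j)ᶜ :=
  subset_iInter₂ fun _ hj ↦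
    (hdisj (ne_of_mem_of_not_mem hj hk).symm).subset_compl_right.trans subset_closure

theorem inter_biInter_closure_compl_of_mem (hdisj : Pairwise (Disjoint on D))
    {J : Set ι} {k : ι} (hk : k ∈ J) (hclosed : IsClosed (D k)) :
    D k ∩ ⋂ j ∈ J, closure (D j)ᶜ = frontier (D k) := by
  have hothers : D k ⊆ ⋂ j ∈ J \ {k}, closure (D j)ᶜ :=
    subset_biInter_closure_compl_of_notMem hdisj fun hk' ↦ hk'.2 rfl
  calc D k ∩ ⋂ j ∈ J, closure (D j)ᶜ
      = D k ∩ (closure (D k)ᶜ ∩ ⋂ j ∈ J \ {k}, closure (D j)ᶜ) := by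
        rw [← biInter_insert k _ fun j ↦ closure (D j)ᶜ, insert_sdiff_singleton,
          insert_eq_of_mem hk]
    _ = D k ∩ closure (D k)ᶜ := by
        rw [inter_left_comm, inter_eq_left.mpr hothers, inter_comm]
    _ = frontier (D k) := by
        rw [frontier_eq_closure_inter_closure, hclosed.closure_eq]

end DisjointClosedSets

section MultisectionPieces

open Set

variable {ι S M : Type*} [TopologicalSpace S] {σ : ι → ι} {D : ι → Set S}

/-- The piece `Wᵢ` of the multisection of a product bundle `M × S`, where the disk sections `D` and
the pieces `Mf` of the base are indexed by a type with successor map `σ`. The cyclic indexing of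
the paper is `σ i = i + 1` on `Fin n`. -/
def multisectionPiece (σ : ι → ι) (D : ι → Set S) (Mf : ι → Set M) (i : ι) : Set (M × S) :=
  (Mf i ×ˢ closure (D i)ᶜ) ∪ (Mf (σ i) ×ˢ D (σ i))

theorem prod_inter_biInter_prod_closure_compl_of_notMem (hdisj : Pairwise (Disjoint on D))
    (Mf : ι → Set M) {J : Set ι} {k : ι} (hk : k ∉ J) :
    (Mf k ×ˢ D k) ∩ ⋂ j ∈ J, Mf j ×ˢ closure (D j)ᶜ = (⋂ j ∈ J ∪ {k}, Mf j) ×ˢ D k := by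
  rw [biInter_prod_eq_biInter_prod_biInter, prod_inter_prod,
    inter_eq_left.mpr (subset_biInter_closure_compl_of_notMem hdisj hk), union_singleton,
    biInter_insert]

theorem prod_inter_biInter_prod_closure_compl_of_mem (hdisj : Pairwise (Disjoint on D))
    (Mf : ι → Set M) {J : Set ι} {k : ι} (hk : k ∈ J) (hclosed : IsClosed (D k)) :
    (Mf k ×ˢ D k) ∩ ⋂ j ∈ J, Mf j ×ˢ closure (D j)ᶜ = (⋂ j ∈ J, Mf j) ×ˢ frontier (D k) := by
  rw [biInter_prod_eq_biInter_prod_biInter, prod_inter_prod,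
    inter_biInter_closure_compl_of_mem hdisj hk hclosed,
    inter_eq_right.mpr (biInter_subset_of_mem hk)]

theorem biInter_multisectionPiece (hσ : σ.Injective) (hdisj : Pairwise (Disjoint on D))
    (Mf : ι → Set M) (I : Set ι) :
    ⋂ i ∈ I, multisectionPiece σ D Mf i =
      (⋂ i ∈ I, Mf i ×ˢ closure (D i)ᶜ) ∪
      ⋃ p ∈ I, (Mf (σ p) ×ˢ D (σ p)) ∩ ⋂ i ∈ I \ {p}, Mf i ×ˢ closure (D i)ᶜ :=
  biInter_union_of_pairwiseDisjoint _ fun _ _ _ _ hij ↦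
    Disjoint.set_prod_right (hdisj (hσ.ne hij)) _ _

theorem iInter_multisection_pieces_general (hσ : σ.Injective) (hσ_ne : ∀ i, σ i ≠ i)
    (hfin : LocallyFinite D) (hclosed : ∀ i, IsClosed (D i)) (hdisj : Pairwise (Disjoint on D))
    (Mf : ι → Set M) (I : Set ι) :
    ⋂ i ∈ I, multisectionPiece σ D Mf i =
      ((⋂ i ∈ I, Mf i) ×ˢ closure (⋃ i ∈ I, D i)ᶜ) ∪
      (⋃ i ∈ {i ∈ I | σ i ∉ I}, (⋂ j ∈ (I \ {i}) ∪ {σ i}, Mf j) ×ˢ D (σ i)) ∪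
      (⋃ i ∈ {i ∈ I | σ i ∈ I}, (⋂ j ∈ I \ {i}, Mf j) ×ˢ frontier (D (σ i))) := by
  rw [biInter_multisectionPiece hσ hdisj, biInter_prod_eq_biInter_prod_biInter,
    closure_compl_biUnion_of_pairwise_disjoint hfin hclosed hdisj, union_assoc,
    ← biUnion_sep_not_union_biUnion_sep I (σ · ∈ I)]
  congr 2
  · refine iUnion₂_congr fun i ⟨_, hσi⟩ ↦ ?_
    exact prod_inter_biInter_prod_closure_compl_of_notMem hdisj Mf fun h ↦ hσi h.1
  · refine iUnion₂_congr fun i ⟨_, hσi⟩ ↦ ?_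
    exact prod_inter_biInter_prod_closure_compl_of_mem hdisj Mf ⟨hσi, hσ_ne i⟩ (hclosed _)

end MultisectionPieces

theorem fin_add_one_ne_self {n : ℕ} (hn : 2 ≤ n) [NeZero n] (i : Fin n) : i + 1 ≠ i := by
  have hone : (1 : Fin n) ≠ 0 := by
    rw [Ne, Fin.one_eq_zero_iff]
    lia
  exact add_ne_left.mpr hone

/-- The key set-theoretic identity in the proof that every surface bundle admits a
multisection. With `W i = (M i ×ˢ closure (S \ D i)) ∪ (M (i+1) ×ˢ D (i+1))`
(indices modulo `n`), the intersection of the `W i` over a nonempty index set `I`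
decomposes into the three pieces described in the paper. -/
theorem iInter_multisection_pieces {S : Type*} [TopologicalSpace S] {M : Type*}
    (n : ℕ) (hn : 2 ≤ n) [NeZero n]
    (D : Fin n → Set S) (hDclosed : ∀ i, IsClosed (D i))
    (hDdisj : Pairwise (Disjoint on D))
    (Mf : Fin n → Set M)
    (W : Fin n → Set (M × S))
    (hW : ∀ i, W i = (Mf i ×ˢ closure ((D i)ᶜ)) ∪ (Mf (i + 1) ×ˢ D (i + 1)))
    (I : Set (Fin n)) (hI : I.Nonempty) :
    (⋂ i ∈ I, W i) =
      ((⋂ i ∈ I, Mf i) ×ˢ closure ((⋃ i ∈ I, D i)ᶜ)) ∪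
      (⋃ i ∈ {i ∈ I | i + 1 ∉ I},
        (⋂ j ∈ (I \ {i}) ∪ {i + 1}, Mf j) ×ˢ D (i + 1)) ∪
      (⋃ i ∈ {i ∈ I | i + 1 ∈ I},
        (⋂ j ∈ I \ {i}, Mf j) ×ˢ frontier (D (i + 1))) := by
  rw [Set.iInter₂_congr fun i _ ↦ hW i]
  exact iInter_multisection_pieces_general (add_left_injective 1) (fin_add_one_ne_self hn)
    (locallyFinite_of_finite D) hDclosed hDdisj Mf I
end
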